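/- For every real number q > 1/2, ∫₀¹ (x^{2q−2} + 1)·log(x^q + 1)/(x^{2q} + 1) dx = (1/(16q))·(ψ'((4q−1)/(4q)) − ψ'((2q−1)/(4q))) − (1/q)·Σ_{n=0}^{∞} 2^n·Γ(n + 2 − 1/q)·Γ(n + 1/q)/(2n+1)! · (ψ(n + 2 − 1/q) − ψ(2n + 2)). -/

import Mathlib

/-- The digamma function ψ(x) = Γ'(x)/Γ(x). -/
noncomputable def digamma (x : ℝ) : ℝ := deriv Real.Gamma x / Real.Gamma x

/-- The trigamma function ψ'(x), the derivative of the digamma function. -/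
noncomputable def trigamma (x : ℝ) : ℝ := deriv digamma x

/-!
Write `g x = log (1 + x ^ q) / (1 + x ^ (2 * q))`. Folding `∫ g` over the half-line at `x = 1` by
`x ↦ 1 / x` produces the integrand of the theorem plus
`q x ^ (2 * q - 2) (-log x) / (1 + x ^ (2 * q))`.

* The logarithmic term, expanded as a geometric series and integrated termwise, is a series of
  inverse squares in arithmetic progressions, that is, a difference of trigamma values.
* In `∫ g`, put `t = x ^ q` and then `t = u / (1 - u)`. As `1 + t ^ 2 = (1 + t) ^ 2 - 2 * t`, this
  gives `∫ u ^ (1 / q - 1) (1 - u) ^ (1 - 1 / q) log (1 - u) / (1 - 2 u (1 - u))` over `(0, 1)`, up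
  to the factor `-1 / q`. Expanding in powers of `2 u (1 - u)` leaves derivatives of the Beta
  integral in its second parameter, hence Gamma and digamma values.
-/

open MeasureTheory Set Filter Topology
open ProbabilityTheory (beta)

section Digamma

variable {x y : ℝ}

lemma hasDerivAt_Gamma_of_pos (hx : 0 < x) :
    HasDerivAt Real.Gamma (Real.Gamma x * digamma x) x := by
  rw [digamma, mul_div_cancel₀ _ (Real.Gamma_pos_of_pos hx).ne']
  exact (Real.differentiableAt_Gamma fun m ↦ by linarith [m.cast_nonneg (α := ℝ)]).hasDerivAt

lemma hasDerivAt_log_Gamma (hx : 0 < x) : HasDerivAt (Real.log ∘ Real.Gamma) (digamma x) x := by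
  have hΓ := (Real.Gamma_pos_of_pos hx).ne'
  simpa [hΓ] using! (hasDerivAt_Gamma_of_pos hx).log hΓ

lemma log_Gamma_add_one (hx : 0 < x) :
    Real.log (Real.Gamma (x + 1)) = Real.log x + Real.log (Real.Gamma x) := by
  rw [Real.Gamma_add_one hx.ne', Real.log_mul hx.ne' (Real.Gamma_pos_of_pos hx).ne']

lemma digamma_add_one (hx : 0 < x) : digamma (x + 1) = digamma x + 1 / x := by
  have h_shift : HasDerivAt (fun y ↦ Real.log (Real.Gamma (y + 1))) (digamma (x + 1)) x :=
    (hasDerivAt_log_Gamma (by positivity)).comp_add_const x 1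
  have h_sum : HasDerivAt (fun y ↦ Real.log y + Real.log (Real.Gamma y)) (x⁻¹ + digamma x) x :=
    (Real.hasDerivAt_log hx.ne').add (hasDerivAt_log_Gamma hx)
  have h_eq : (fun y ↦ Real.log (Real.Gamma (y + 1))) =ᶠ[𝓝 x]
      fun y ↦ Real.log y + Real.log (Real.Gamma y) :=
    (eventually_gt_nhds hx).mono fun y ↦ log_Gamma_add_one
  rw [h_shift.unique (h_sum.congr_of_eventuallyEq h_eq), one_div, add_comm]

lemma digamma_add_natCast (hx : 0 < x) (N : ℕ) :
    digamma (x + N) = digamma x + ∑ n ∈ Finset.range N, 1 / (x + n) := by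
  induction N with
  | zero => simp
  | succ k ih =>
    rw [Finset.sum_range_succ, Nat.cast_succ, ← add_assoc, digamma_add_one (by positivity), ih,
      add_assoc]

/-- Since `log ∘ Γ` is convex, its secant slope `log x` over `[x, x + 1]` lies between `ψ x` and
`ψ (x + 1)`. -/
lemma log_mem_Icc_digamma (hx : 0 < x) : Real.log x ∈ Icc (digamma x) (digamma (x + 1)) := by
  have hx' : 0 < x + 1 := by positivity
  have h_slope : slope (Real.log ∘ Real.Gamma) x (x + 1) = Real.log x := by
    simp [slope_def_field, log_Gamma_add_one hx]
  rw [← h_slope]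
  exact ⟨Real.convexOn_log_Gamma.le_slope_of_hasDerivAt hx hx' (lt_add_one x)
      (hasDerivAt_log_Gamma hx),
    Real.convexOn_log_Gamma.slope_le_of_hasDerivAt hx hx' (lt_add_one x)
      (hasDerivAt_log_Gamma hx')⟩

lemma tendsto_digamma_sub_log : Tendsto (fun x ↦ digamma x - Real.log x) atTop (𝓝 0) := by
  have h_inv : Tendsto (fun x : ℝ ↦ -x⁻¹) atTop (𝓝 0) := by
    simpa using (tendsto_inv_atTop_zero (𝕜 := ℝ)).neg
  refine tendsto_of_tendsto_of_tendsto_of_le_of_le' h_inv tendsto_const_nhds ?_ ?_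
  all_goals
    filter_upwards [eventually_gt_atTop 0] with x hx
    obtain ⟨h_lower, h_upper⟩ := log_mem_Icc_digamma hx
    rw [digamma_add_one hx, one_div] at h_upper
    linarith

lemma tendsto_digamma_add_natCast_sub_log (x : ℝ) :
    Tendsto (fun N : ℕ ↦ digamma (x + N) - Real.log N) atTop (𝓝 0) := by
  have h_digamma : Tendsto (fun N : ℕ ↦ digamma (x + N) - Real.log (x + N)) atTop (𝓝 0) :=
    tendsto_digamma_sub_log.comp (tendsto_atTop_add_const_left _ x tendsto_natCast_atTop_atTop)
  have h_log : Tendsto (fun N : ℕ ↦ Real.log (x + N) - Real.log N) atTop (𝓝 0) := by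
    simpa only [add_comm x] using!
      (Real.tendsto_log_comp_add_sub_log x).comp tendsto_natCast_atTop_atTop
  simpa using h_digamma.add h_log

lemma hasSum_digamma_sub (hx : 0 < x) (hy : 0 < y) :
    HasSum (fun n : ℕ ↦ 1 / (x + n) - 1 / (y + n)) (digamma y - digamma x) := by
  wlog hxy : x ≤ y generalizing x y
  · simpa only [neg_sub] using (this hy hx (le_of_not_ge hxy)).neg
  rw [hasSum_iff_tendsto_nat_of_nonneg fun n ↦ sub_nonneg.2 (by gcongr)]
  have h_lim := ((tendsto_digamma_add_natCast_sub_log x).sub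
    (tendsto_digamma_add_natCast_sub_log y)).const_add (digamma y - digamma x)
  rw [sub_zero, add_zero] at h_lim
  refine h_lim.congr fun N ↦ ?_
  rw [digamma_add_natCast hx, digamma_add_natCast hy, Finset.sum_sub_distrib]
  ring

lemma summable_one_div_add_natCast_sq (x : ℝ) : Summable fun n : ℕ ↦ 1 / (x + n) ^ 2 := by
  refine ((Real.summable_one_div_nat_add_rpow x 2).2 one_lt_two).congr fun n ↦ ?_
  rw [Real.rpow_two, sq_abs, add_comm]

lemma hasDerivAt_digamma (hx : 0 < x) :
    HasDerivAt digamma (∑' n : ℕ, 1 / (x + n) ^ 2) x := by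
  have hx2 : 0 < x / 2 := half_pos hx
  have h_mem : x ∈ Ioi (x / 2) := half_lt_self hx
  have h_term (n : ℕ) (y : ℝ) (hy : y ∈ Ioi (x / 2)) :
      HasDerivAt (fun z : ℝ ↦ 1 / (x + n) - 1 / (z + n)) (1 / (y + n) ^ 2) y := by
    have hy_pos : 0 < y := hx2.trans hy
    simpa [neg_div] using
      (((hasDerivAt_id' y).add_const (n : ℝ)).inv (by positivity)).const_sub (1 / (x + n))
  have h_bound (n : ℕ) (y : ℝ) (hy : y ∈ Ioi (x / 2)) :
      ‖1 / (y + n) ^ 2‖ ≤ 1 / (x / 2 + n) ^ 2 := by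
    have hy : x / 2 < y := hy
    rw [Real.norm_of_nonneg (by positivity)]
    gcongr
  have h_tsum := hasDerivAt_tsum_of_isPreconnected (summable_one_div_add_natCast_sq (x / 2))
    isOpen_Ioi isPreconnected_Ioi h_term h_bound h_mem (hasSum_digamma_sub hx hx).summable h_mem
  have h_eq : (fun y ↦ digamma y - digamma x) =ᶠ[𝓝 x]
      fun y ↦ ∑' n : ℕ, (1 / (x + n) - 1 / (y + n)) :=
    (eventually_gt_nhds hx).mono fun y hy ↦ (hasSum_digamma_sub hx hy).tsum_eq.symm
  simpa using (h_tsum.congr_of_eventuallyEq h_eq).add_const (digamma x)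

lemma hasSum_trigamma (hx : 0 < x) : HasSum (fun n : ℕ ↦ 1 / (x + n) ^ 2) (trigamma x) := by
  rw [trigamma, (hasDerivAt_digamma hx).deriv]
  exact (summable_one_div_add_natCast_sq x).hasSum

end Digamma

section LogPower

variable {a b : ℝ}

lemma hasDerivAt_rpow_add_negMulLog_rpow {x : ℝ} (ha : a ≠ 0) (hx : 0 < x) :
    HasDerivAt (fun y ↦ (y ^ a + Real.negMulLog (y ^ a)) / a ^ 2)
      (x ^ (a - 1) * -Real.log x) x := by
  have h_outer := (hasDerivAt_id' (x ^ a)).add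
    (Real.hasDerivAt_negMulLog (Real.rpow_pos_of_pos hx a).ne')
  have h_comp := (h_outer.comp x (Real.hasDerivAt_rpow_const (Or.inl hx.ne'))).div_const (a ^ 2)
  convert! h_comp using 1
  rw [Real.log_rpow hx]
  field_simp
  ring

lemma continuous_rpow_add_negMulLog_rpow (ha : 0 ≤ a) :
    Continuous fun x : ℝ ↦ (x ^ a + Real.negMulLog (x ^ a)) / a ^ 2 := by
  have h_rpow := Real.continuous_rpow_const ha
  exact (h_rpow.add (Real.continuous_negMulLog.comp h_rpow)).div_const _

lemma rpow_mul_neg_log_nonneg {x : ℝ} (hx : x ∈ Ioo (0 : ℝ) 1) :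
    0 ≤ x ^ (a - 1) * -Real.log x :=
  mul_nonneg (Real.rpow_nonneg hx.1.le _) (neg_nonneg.2 (Real.log_nonpos hx.1.le hx.2.le))

lemma integrableOn_rpow_mul_neg_log (ha : 0 < a) :
    IntegrableOn (fun x : ℝ ↦ x ^ (a - 1) * -Real.log x) (Ioo 0 1) :=
  (intervalIntegral.integrableOn_deriv_of_nonneg
    (continuous_rpow_add_negMulLog_rpow ha.le).continuousOn
    (fun _ hx ↦ hasDerivAt_rpow_add_negMulLog_rpow ha.ne' hx.1)
    fun _ ↦ rpow_mul_neg_log_nonneg).mono_set Ioo_subset_Ioc_self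

lemma integral_rpow_mul_neg_log (ha : 0 < a) :
    ∫ x in Ioo (0 : ℝ) 1, x ^ (a - 1) * -Real.log x = 1 / a ^ 2 := by
  have h_int := (intervalIntegrable_iff_integrableOn_Ioo_of_le zero_le_one).2
    (integrableOn_rpow_mul_neg_log ha)
  rw [← integral_Ioc_eq_integral_Ioo, ← intervalIntegral.integral_of_le zero_le_one,
    intervalIntegral.integral_eq_sub_of_hasDerivAt_of_le zero_le_one
      (continuous_rpow_add_negMulLog_rpow ha.le).continuousOn
      (fun x hx ↦ hasDerivAt_rpow_add_negMulLog_rpow ha.ne' hx.1) h_int]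
  simp [Real.zero_rpow ha.ne']

lemma integrableOn_rpow_mul_neg_log_div (ha : 0 < a) (b : ℝ) :
    IntegrableOn (fun x : ℝ ↦ x ^ (a - 1) * -Real.log x / (1 + x ^ b)) (Ioo 0 1) := by
  refine (integrableOn_rpow_mul_neg_log ha).mono'
    (Measurable.aestronglyMeasurable (by fun_prop)) ?_
  filter_upwards [ae_restrict_mem measurableSet_Ioo] with x hx
  have h_nonneg : 0 ≤ x ^ (a - 1) * -Real.log x := rpow_mul_neg_log_nonneg hx
  have h_rpow : 0 ≤ x ^ b := Real.rpow_nonneg hx.1.le b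
  rw [Real.norm_of_nonneg (by positivity)]
  exact div_le_self h_nonneg (by linarith)

lemma hasSum_trigamma_sub (ha : 0 < a) (hb : 0 < b) :
    HasSum (fun n : ℕ ↦ 1 / (a + 2 * b * n) ^ 2 - 1 / (a + 2 * b * n + b) ^ 2)
      ((trigamma (a / (2 * b)) - trigamma (a / (2 * b) + 1 / 2)) / (4 * b ^ 2)) := by
  have ha' : 0 < a / (2 * b) := by positivity
  refine (((hasSum_trigamma ha').sub
    (hasSum_trigamma (add_pos ha' one_half_pos))).div_const (4 * b ^ 2)).congr_fun fun n ↦ ?_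
  have h_even : a + 2 * b * n = 2 * b * (a / (2 * b) + n) := by field_simp
  have h_odd : a + 2 * b * n + b = 2 * b * (a / (2 * b) + 1 / 2 + n) := by field_simp; ring
  rw [h_odd, h_even]
  field_simp
  ring

/-- The alternating series of `1 / (1 + x ^ b)`, grouped in pairs so that all terms are
nonnegative and no alternating sum has to be exchanged with the integral. -/
lemma hasSum_rpow_mul_neg_log_div {x : ℝ} (hb : 0 < b) (hx : x ∈ Ioo (0 : ℝ) 1) :
    HasSum (fun n : ℕ ↦ x ^ (a + 2 * b * n - 1) * -Real.log x
        - x ^ (a + 2 * b * n + b - 1) * -Real.log x)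
      (x ^ (a - 1) * -Real.log x / (1 + x ^ b)) := by
  set r := x ^ b
  have hr0 : 0 < r := Real.rpow_pos_of_pos hx.1 b
  have hr1 : r < 1 := Real.rpow_lt_one hx.1.le hx.2 hb
  have h_pow (n : ℕ) : x ^ (2 * b * n) = (r ^ 2) ^ n := by
    rw [Real.rpow_mul_natCast hx.1.le, mul_comm 2 b, Real.rpow_mul hx.1.le, Real.rpow_two]
  have h_geom := (hasSum_geometric_of_lt_one (sq_nonneg r)
    (pow_lt_one₀ hr0.le hr1 two_ne_zero)).mul_left (x ^ (a - 1) * -Real.log x * (1 - r))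
  convert! h_geom using 1
  · funext n
    rw [show a + 2 * b * n + b - 1 = a - 1 + 2 * b * n + b by ring,
      show a + 2 * b * n - 1 = a - 1 + 2 * b * n by ring, Real.rpow_add hx.1 _ b,
      Real.rpow_add hx.1, h_pow]
    ring
  · have h_ne : 1 - r ≠ 0 := by linarith
    rw [show 1 - r ^ 2 = (1 - r) * (1 + r) by ring]
    field_simp

lemma rpow_mul_neg_log_le_of_exponent_ge {x p p' : ℝ} (hx : x ∈ Ioo (0 : ℝ) 1) (h : p ≤ p') :
    x ^ p' * -Real.log x ≤ x ^ p * -Real.log x :=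
  mul_le_mul_of_nonneg_right (Real.rpow_le_rpow_of_exponent_ge hx.1 hx.2.le h)
    (neg_nonneg.2 (Real.log_nonpos hx.1.le hx.2.le))

lemma integral_rpow_mul_neg_log_div (ha : 0 < a) (hb : 0 < b) :
    ∫ x in Ioo (0 : ℝ) 1, x ^ (a - 1) * -Real.log x / (1 + x ^ b) =
      (trigamma (a / (2 * b)) - trigamma (a / (2 * b) + 1 / 2)) / (4 * b ^ 2) := by
  let F (n : ℕ) (x : ℝ) : ℝ :=
    x ^ (a + 2 * b * n - 1) * -Real.log x - x ^ (a + 2 * b * n + b - 1) * -Real.log x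
  have h_even (n : ℕ) : 0 < a + 2 * b * n := by positivity
  have h_odd (n : ℕ) : 0 < a + 2 * b * n + b := by positivity
  have hF_int (n : ℕ) : IntegrableOn (F n) (Ioo 0 1) :=
    (integrableOn_rpow_mul_neg_log (h_even n)).sub (integrableOn_rpow_mul_neg_log (h_odd n))
  have hF_integral (n : ℕ) : ∫ x in Ioo (0 : ℝ) 1, F n x =
      1 / (a + 2 * b * n) ^ 2 - 1 / (a + 2 * b * n + b) ^ 2 := by
    rw [integral_sub (integrableOn_rpow_mul_neg_log (h_even n))
      (integrableOn_rpow_mul_neg_log (h_odd n)), integral_rpow_mul_neg_log (h_even n),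
      integral_rpow_mul_neg_log (h_odd n)]
  have hF_norm (n : ℕ) : ∫ x in Ioo (0 : ℝ) 1, ‖F n x‖ =
      1 / (a + 2 * b * n) ^ 2 - 1 / (a + 2 * b * n + b) ^ 2 := by
    rw [← hF_integral n]
    exact setIntegral_congr_fun measurableSet_Ioo fun x hx ↦
      Real.norm_of_nonneg (sub_nonneg.2 (rpow_mul_neg_log_le_of_exponent_ge hx (by linarith)))
  have h_sum := hasSum_integral_of_summable_integral_norm (μ := volume.restrict (Ioo 0 1)) hF_int
    (by simpa only [hF_norm] using (hasSum_trigamma_sub ha hb).summable)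
  simp only [hF_integral] at h_sum
  rw [← h_sum.unique (hasSum_trigamma_sub ha hb)]
  exact setIntegral_congr_fun measurableSet_Ioo fun x hx ↦
    (hasSum_rpow_mul_neg_log_div hb hx).tsum_eq.symm

end LogPower

section Beta

variable {a b z : ℝ}

lemma ofReal_rpow_mul_one_sub_rpow {x : ℝ} (hx : x ∈ Ioo (0 : ℝ) 1) (a b : ℝ) :
    (x : ℂ) ^ ((a : ℂ) - 1) * (1 - (x : ℂ)) ^ ((b : ℂ) - 1) =
      ((x ^ (a - 1) * (1 - x) ^ (b - 1) : ℝ) : ℂ) := by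
  push_cast [Complex.ofReal_cpow hx.1.le, Complex.ofReal_cpow (sub_nonneg.2 hx.2.le)]
  rfl

lemma integrableOn_rpow_mul_one_sub_rpow (ha : 0 < a) (hb : 0 < b) :
    IntegrableOn (fun x : ℝ ↦ x ^ (a - 1) * (1 - x) ^ (b - 1)) (Ioo 0 1) := by
  have h_complex := Complex.betaIntegral_convergent (u := a) (v := b) (by simpa) (by simpa)
  rw [intervalIntegrable_iff_integrableOn_Ioo_of_le zero_le_one,
    integrableOn_congr_fun (fun x hx ↦ ofReal_rpow_mul_one_sub_rpow hx a b)
      measurableSet_Ioo] at h_complex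
  exact h_complex.re

lemma integral_rpow_mul_one_sub_rpow (ha : 0 < a) (hb : 0 < b) :
    ∫ x in Ioo (0 : ℝ) 1, x ^ (a - 1) * (1 - x) ^ (b - 1) = beta a b := by
  rw [ProbabilityTheory.beta_eq_betaIntegralReal a b ha hb, Complex.betaIntegral,
    intervalIntegral.integral_of_le zero_le_one, integral_Ioc_eq_integral_Ioo,
    setIntegral_congr_fun measurableSet_Ioo fun x hx ↦ ofReal_rpow_mul_one_sub_rpow hx a b,
    integral_complex_ofReal, Complex.ofReal_re]

lemma hasDerivAt_beta_right (ha : 0 < a) (hb : 0 < b) :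
    HasDerivAt (beta a) (beta a b * (digamma b - digamma (a + b))) b := by
  have hab : 0 < a + b := add_pos ha hb
  have hΓ : Real.Gamma (a + b) ≠ 0 := (Real.Gamma_pos_of_pos hab).ne'
  have h_num := (hasDerivAt_Gamma_of_pos hb).const_mul (Real.Gamma a)
  have h_den := (hasDerivAt_Gamma_of_pos hab).comp_const_add a b
  convert! h_num.div h_den hΓ using 1
  rw [beta]
  field_simp

lemma abs_rpow_mul_log_le {x p p' : ℝ} (hx : 0 < x) (hx' : x ≤ 1) (h : p < p') :
    |x ^ p' * Real.log x| ≤ x ^ p / (p' - p) := by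
  have h_log := (Real.abs_log_mul_self_rpow_lt x (p' - p) hx hx' (sub_pos.2 h)).le
  have h_split : x ^ p' = x ^ p * x ^ (p' - p) := by rw [← Real.rpow_add hx, add_sub_cancel]
  calc |x ^ p' * Real.log x| = x ^ p * |Real.log x * x ^ (p' - p)| := by
        rw [h_split, mul_assoc, abs_mul, abs_of_pos (Real.rpow_pos_of_pos hx p),
          mul_comm (x ^ (p' - p))]
    _ ≤ x ^ p * (1 / (p' - p)) :=
        mul_le_mul_of_nonneg_left h_log (Real.rpow_nonneg hx.le p)
    _ = x ^ p / (p' - p) := mul_one_div _ _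

lemma integrableOn_and_hasDerivAt_integral_rpow_mul_one_sub_rpow (ha : 0 < a) (hb : 0 < b) :
    IntegrableOn (fun x : ℝ ↦ x ^ (a - 1) * ((1 - x) ^ (b - 1) * Real.log (1 - x))) (Ioo 0 1) ∧
      HasDerivAt (fun c ↦ ∫ x in Ioo (0 : ℝ) 1, x ^ (a - 1) * (1 - x) ^ (c - 1))
        (∫ x in Ioo (0 : ℝ) 1, x ^ (a - 1) * ((1 - x) ^ (b - 1) * Real.log (1 - x))) b := by
  -- For `c > b / 2`, spending `b / 4` of the exponent absorbs the logarithm and leaves `b / 4`.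
  refine hasDerivAt_integral_of_dominated_loc_of_deriv_le (μ := volume.restrict (Ioo 0 1))
    (F := fun c x ↦ x ^ (a - 1) * (1 - x) ^ (c - 1))
    (F' := fun c x ↦ x ^ (a - 1) * ((1 - x) ^ (c - 1) * Real.log (1 - x)))
    (bound := fun x ↦ x ^ (a - 1) * (1 - x) ^ (b / 4 - 1) * (4 / b))
    (Ioi_mem_nhds (half_lt_self hb))
    (.of_forall fun c ↦ Measurable.aestronglyMeasurable (by fun_prop))
    (integrableOn_rpow_mul_one_sub_rpow ha hb)
    (Measurable.aestronglyMeasurable (by fun_prop)) ?_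
    ((integrableOn_rpow_mul_one_sub_rpow ha (by positivity)).mul_const _) ?_
  · filter_upwards [ae_restrict_mem measurableSet_Ioo] with x hx c hc
    have hc : b / 2 < c := hc
    have hx' : 0 < 1 - x := sub_pos.2 hx.2
    have h_weight : 0 ≤ x ^ (a - 1) := Real.rpow_nonneg hx.1.le _
    rw [norm_mul, Real.norm_of_nonneg h_weight, mul_assoc]
    refine mul_le_mul_of_nonneg_left ?_ h_weight
    calc |(1 - x) ^ (c - 1) * Real.log (1 - x)|
        ≤ (1 - x) ^ (b / 4 - 1) / (c - 1 - (b / 4 - 1)) :=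
          abs_rpow_mul_log_le hx' (by linarith [hx.1]) (by linarith)
      _ ≤ (1 - x) ^ (b / 4 - 1) / (b / 4) := by
          gcongr
          linarith
      _ = (1 - x) ^ (b / 4 - 1) * (4 / b) := by rw [div_eq_mul_inv, inv_div]
  · filter_upwards [ae_restrict_mem measurableSet_Ioo] with x hx c _
    simpa [mul_comm (Real.log _)] using
      (((hasDerivAt_id' c).sub_const 1).const_rpow (sub_pos.2 hx.2)).const_mul (x ^ (a - 1))

lemma integrableOn_rpow_mul_one_sub_rpow_mul_log (ha : 0 < a) (hb : 0 < b) :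
    IntegrableOn (fun x : ℝ ↦ x ^ (a - 1) * ((1 - x) ^ (b - 1) * Real.log (1 - x))) (Ioo 0 1) :=
  (integrableOn_and_hasDerivAt_integral_rpow_mul_one_sub_rpow ha hb).1

lemma integral_rpow_mul_one_sub_rpow_mul_log (ha : 0 < a) (hb : 0 < b) :
    ∫ x in Ioo (0 : ℝ) 1, x ^ (a - 1) * ((1 - x) ^ (b - 1) * Real.log (1 - x)) =
      beta a b * (digamma b - digamma (a + b)) := by
  have h_eq : beta a =ᶠ[𝓝 b] fun c ↦ ∫ x in Ioo (0 : ℝ) 1, x ^ (a - 1) * (1 - x) ^ (c - 1) :=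
    (eventually_gt_nhds hb).mono fun c hc ↦ (integral_rpow_mul_one_sub_rpow ha hc).symm
  exact ((integrableOn_and_hasDerivAt_integral_rpow_mul_one_sub_rpow
    ha hb).2.congr_of_eventuallyEq h_eq).unique (hasDerivAt_beta_right ha hb)

lemma norm_mul_mul_one_sub_le {x : ℝ} (hx : x ∈ Ioo (0 : ℝ) 1) (z : ℝ) :
    ‖z * (x * (1 - x))‖ ≤ |z| / 4 := by
  have h_nonneg : 0 ≤ x * (1 - x) := mul_nonneg hx.1.le (sub_nonneg.2 hx.2.le)
  have h_quarter : x * (1 - x) ≤ 1 / 4 := by linarith [sq_nonneg (2 * x - 1)]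
  rw [norm_mul, Real.norm_eq_abs, Real.norm_of_nonneg h_nonneg, div_eq_mul_one_div]
  gcongr

lemma integrableOn_rpow_mul_log_div_one_sub_mul (ha : 0 < a) (hb : 0 < b) (hz : |z| < 4) :
    IntegrableOn (fun x : ℝ ↦ x ^ (a - 1) * ((1 - x) ^ (b - 1) * Real.log (1 - x)) /
      (1 - z * (x * (1 - x)))) (Ioo 0 1) := by
  refine ((integrableOn_rpow_mul_one_sub_rpow_mul_log ha hb).norm.div_const (1 - |z| / 4)).mono'
    (Measurable.aestronglyMeasurable (by fun_prop)) ?_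
  filter_upwards [ae_restrict_mem measurableSet_Ioo] with x hx
  have h_den : 1 - |z| / 4 ≤ ‖1 - z * (x * (1 - x))‖ := by
    linarith [Real.le_norm_self (1 - z * (x * (1 - x))), norm_mul_mul_one_sub_le hx z,
      Real.le_norm_self (z * (x * (1 - x)))]
  rw [norm_div]
  gcongr
  linarith

lemma rpow_mul_log_mul_pow {x : ℝ} (hx : x ∈ Ioo (0 : ℝ) 1) (a b z : ℝ) (n : ℕ) :
    x ^ (a - 1) * ((1 - x) ^ (b - 1) * Real.log (1 - x)) * (z * (x * (1 - x))) ^ n =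
      z ^ n * (x ^ (a + n - 1) * ((1 - x) ^ (b + n - 1) * Real.log (1 - x))) := by
  rw [add_sub_right_comm a, add_sub_right_comm b, Real.rpow_add_natCast hx.1.ne',
    Real.rpow_add_natCast (sub_pos.2 hx.2).ne', mul_pow, mul_pow]
  ring

lemma hasSum_integral_rpow_mul_log_div_one_sub_mul (ha : 0 < a) (hb : 0 < b) (hz : |z| < 4) :
    HasSum (fun n : ℕ ↦ z ^ n * (beta (a + n) (b + n) *
        (digamma (b + n) - digamma (a + n + (b + n)))))
      (∫ x in Ioo (0 : ℝ) 1, x ^ (a - 1) * ((1 - x) ^ (b - 1) * Real.log (1 - x)) /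
        (1 - z * (x * (1 - x)))) := by
  let w (x : ℝ) : ℝ := x ^ (a - 1) * ((1 - x) ^ (b - 1) * Real.log (1 - x))
  have hw : IntegrableOn w (Ioo 0 1) := integrableOn_rpow_mul_one_sub_rpow_mul_log ha hb
  have hz' : |z| / 4 < 1 := by linarith
  have h_sum := hasSum_integral_of_dominated_convergence (μ := volume.restrict (Ioo 0 1))
    (F := fun (n : ℕ) x ↦ w x * (z * (x * (1 - x))) ^ n)
    (f := fun x ↦ w x / (1 - z * (x * (1 - x)))) (fun n x ↦ ‖w x‖ * (|z| / 4) ^ n)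
    (fun n ↦ Measurable.aestronglyMeasurable (by fun_prop)) (fun n ↦ ?bound)
    (.of_forall fun x ↦ (summable_geometric_of_lt_one (by positivity) hz').mul_left _)
    (by simpa only [tsum_mul_left] using hw.norm.mul_const _) ?limit
  case bound =>
    filter_upwards [ae_restrict_mem measurableSet_Ioo] with x hx
    rw [norm_mul, norm_pow]
    gcongr
    exact norm_mul_mul_one_sub_le hx z
  case limit =>
    filter_upwards [ae_restrict_mem measurableSet_Ioo] with x hx
    exact (hasSum_geometric_of_norm_lt_one
      ((norm_mul_mul_one_sub_le hx z).trans_lt hz')).mul_left (w x)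
  refine h_sum.congr_fun fun n ↦ ?_
  rw [setIntegral_congr_fun measurableSet_Ioo fun x hx ↦ rpow_mul_log_mul_pow hx a b z n,
    integral_const_mul, integral_rpow_mul_one_sub_rpow_mul_log (by positivity) (by positivity)]

end Beta

section HalfLine

variable {E : Type*} [NormedAddCommGroup E] [NormedSpace ℝ E]

lemma image_div_one_sub_Ioo : (fun u : ℝ ↦ u / (1 - u)) '' Ioo 0 1 = Ioi 0 := by
  refine Subset.antisymm ?_ fun t (ht : 0 < t) ↦ ⟨t / (1 + t), ⟨by positivity, ?_⟩, ?_⟩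
  · rintro - ⟨u, hu, rfl⟩
    exact div_pos hu.1 (sub_pos.2 hu.2)
  · rw [div_lt_one (by positivity)]
    linarith
  · simp only
    field_simp
    ring

lemma injOn_div_one_sub_Ioo : InjOn (fun u : ℝ ↦ u / (1 - u)) (Ioo 0 1) := by
  intro u hu v hv huv
  have huv : u / (1 - u) = v / (1 - v) := huv
  rw [div_eq_div_iff (sub_pos.2 hu.2).ne' (sub_pos.2 hv.2).ne'] at huv
  linarith

lemma hasDerivAt_div_one_sub {u : ℝ} (hu : 1 - u ≠ 0) :
    HasDerivAt (fun u : ℝ ↦ u / (1 - u)) ((1 - u) ^ 2)⁻¹ u := by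
  convert! (hasDerivAt_id' u).div ((hasDerivAt_id' u).const_sub 1) hu using 1
  field_simp
  ring

lemma integrableOn_Ioo_comp_div_one_sub_iff (g : ℝ → E) :
    IntegrableOn (fun u : ℝ ↦ ((1 - u) ^ 2)⁻¹ • g (u / (1 - u))) (Ioo 0 1) ↔
      IntegrableOn g (Ioi 0) := by
  rw [← image_div_one_sub_Ioo, integrableOn_image_iff_integrableOn_abs_deriv_smul measurableSet_Ioo
    (fun u hu ↦ (hasDerivAt_div_one_sub (sub_pos.2 hu.2).ne').hasDerivWithinAt)
    injOn_div_one_sub_Ioo]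
  simp only [abs_inv, abs_sq]

lemma integral_Ioo_comp_div_one_sub (g : ℝ → E) :
    ∫ u in Ioo (0 : ℝ) 1, ((1 - u) ^ 2)⁻¹ • g (u / (1 - u)) = ∫ t in Ioi 0, g t := by
  rw [← image_div_one_sub_Ioo, integral_image_eq_integral_abs_deriv_smul measurableSet_Ioo
    (fun u hu ↦ (hasDerivAt_div_one_sub (sub_pos.2 hu.2).ne').hasDerivWithinAt)
    injOn_div_one_sub_Ioo]
  simp only [abs_inv, abs_sq]

lemma image_inv_Ioo_zero_one : (fun x : ℝ ↦ x⁻¹) '' Ioo 0 1 = Ioi 1 := by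
  rw [image_inv_eq_inv, inv_Ioo_0_left zero_lt_one, inv_one]

lemma integrableOn_Ioo_comp_inv_iff (g : ℝ → E) :
    IntegrableOn (fun x : ℝ ↦ (x ^ 2)⁻¹ • g x⁻¹) (Ioo 0 1) ↔ IntegrableOn g (Ioi 1) := by
  rw [← image_inv_Ioo_zero_one, integrableOn_image_iff_integrableOn_abs_deriv_smul measurableSet_Ioo
    (fun x hx ↦ (hasDerivAt_inv hx.1.ne').hasDerivWithinAt) inv_injective.injOn]
  simp only [abs_neg, abs_inv, abs_sq]

lemma integral_Ioo_comp_inv (g : ℝ → E) :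
    ∫ x in Ioo (0 : ℝ) 1, (x ^ 2)⁻¹ • g x⁻¹ = ∫ x in Ioi 1, g x := by
  rw [← image_inv_Ioo_zero_one, integral_image_eq_integral_abs_deriv_smul measurableSet_Ioo
    (fun x hx ↦ (hasDerivAt_inv hx.1.ne').hasDerivWithinAt) inv_injective.injOn]
  simp only [abs_neg, abs_inv, abs_sq]

variable {g : ℝ → E}

lemma integrableOn_Ioo_add_comp_inv (hg : IntegrableOn g (Ioi 0)) :
    IntegrableOn (fun x : ℝ ↦ g x + (x ^ 2)⁻¹ • g x⁻¹) (Ioo 0 1) :=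
  (hg.mono_set Ioo_subset_Ioi_self).add
    ((integrableOn_Ioo_comp_inv_iff g).2 (hg.mono_set (Ioi_subset_Ioi zero_le_one)))

lemma integral_Ioo_add_comp_inv (hg : IntegrableOn g (Ioi 0)) :
    ∫ x in Ioo (0 : ℝ) 1, (g x + (x ^ 2)⁻¹ • g x⁻¹) = ∫ x in Ioi 0, g x := by
  have hg_Ioi : IntegrableOn g (Ioi 1) := hg.mono_set (Ioi_subset_Ioi zero_le_one)
  rw [integral_add (hg.mono_set Ioo_subset_Ioi_self) ((integrableOn_Ioo_comp_inv_iff g).2 hg_Ioi),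
    integral_Ioo_comp_inv, ← integral_Ioc_eq_integral_Ioo,
    ← setIntegral_union (Ioc_disjoint_Ioi le_rfl) measurableSet_Ioi
      (hg.mono_set Ioc_subset_Ioi_self) hg_Ioi, Ioc_union_Ioi_eq_Ioi zero_le_one]

end HalfLine

section LogHalfLine

variable {a b z : ℝ}

lemma rpow_mul_log_div_comp_div_one_sub {u : ℝ} (hu : u ∈ Ioo (0 : ℝ) 1) (a b z : ℝ) :
    ((1 - u) ^ 2)⁻¹ • ((u / (1 - u)) ^ (a - 1) * (1 + u / (1 - u)) ^ (2 - a - b) *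
        Real.log (1 + u / (1 - u)) / ((1 + u / (1 - u)) ^ 2 - z * (u / (1 - u)))) =
      -(u ^ (a - 1) * ((1 - u) ^ (b - 1) * Real.log (1 - u)) / (1 - z * (u * (1 - u)))) := by
  have hv : 0 < 1 - u := sub_pos.2 hu.2
  have h_add : 1 + u / (1 - u) = (1 - u)⁻¹ := by field_simp; ring
  have h_den : ((1 - u)⁻¹) ^ 2 - z * (u / (1 - u)) =
      ((1 - u) ^ 2)⁻¹ * (1 - z * (u * (1 - u))) := by field_simp
  have h_rpow : (1 - u) ^ (b - 1) = ((1 - u) ^ (a - 1))⁻¹ * ((1 - u) ^ (2 - a - b))⁻¹ := by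
    rw [← Real.rpow_neg hv.le, ← Real.rpow_neg hv.le, ← Real.rpow_add hv]
    ring_nf
  rw [h_add, h_den, h_rpow, Real.div_rpow hu.1.le hv.le, Real.inv_rpow hv.le, Real.log_inv,
    smul_eq_mul, ← mul_div_assoc, mul_div_mul_left _ _ (by positivity)]
  ring

lemma integrableOn_rpow_mul_log_div_sq_sub (ha : 0 < a) (hb : 0 < b) (hz : |z| < 4) :
    IntegrableOn (fun t : ℝ ↦ t ^ (a - 1) * (1 + t) ^ (2 - a - b) * Real.log (1 + t) /
      ((1 + t) ^ 2 - z * t)) (Ioi 0) := by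
  rw [← integrableOn_Ioo_comp_div_one_sub_iff, integrableOn_congr_fun
    (fun u hu ↦ rpow_mul_log_div_comp_div_one_sub hu a b z) measurableSet_Ioo]
  exact (integrableOn_rpow_mul_log_div_one_sub_mul ha hb hz).neg

lemma hasSum_integral_rpow_mul_log_div_sq_sub (ha : 0 < a) (hb : 0 < b) (hz : |z| < 4) :
    HasSum (fun n : ℕ ↦ z ^ n * (beta (a + n) (b + n) *
        (digamma (b + n) - digamma (a + n + (b + n)))))
      (-∫ t in Ioi (0 : ℝ), t ^ (a - 1) * (1 + t) ^ (2 - a - b) * Real.log (1 + t) /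
        ((1 + t) ^ 2 - z * t)) := by
  rw [← integral_Ioo_comp_div_one_sub, setIntegral_congr_fun measurableSet_Ioo
    fun u hu ↦ rpow_mul_log_div_comp_div_one_sub hu a b z, integral_neg, neg_neg]
  exact hasSum_integral_rpow_mul_log_div_one_sub_mul ha hb hz

end LogHalfLine

section LogRpow

variable {q : ℝ}

lemma rpow_mul_log_div_comp_rpow {t : ℝ} (hq : q ≠ 0) (ht : 0 < t) :
    t ^ (1 / q - 1) • (Real.log ((t ^ (1 / q)) ^ q + 1) / ((t ^ (1 / q)) ^ (2 * q) + 1)) =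
      t ^ (1 / q - 1) * (1 + t) ^ (2 - 1 / q - (2 - 1 / q)) * Real.log (1 + t) /
        ((1 + t) ^ 2 - 2 * t) := by
  have h_den : t ^ 2 + 1 = (1 + t) ^ 2 - 2 * t := by ring
  rw [mul_comm 2 q, Real.rpow_mul (by positivity), one_div, Real.rpow_inv_rpow ht.le hq,
    Real.rpow_two, h_den, sub_self, Real.rpow_zero, mul_one, add_comm 1 t,
    smul_eq_mul, mul_div_assoc]

lemma integrableOn_log_rpow_add_one_div (hq : 1 / 2 < q) :
    IntegrableOn (fun x : ℝ ↦ Real.log (x ^ q + 1) / (x ^ (2 * q) + 1)) (Ioi 0) := by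
  have hq0 : 0 < q := one_half_pos.trans hq
  rw [← integrableOn_Ioi_comp_rpow_iff' _ (one_div_pos.2 hq0).ne', integrableOn_congr_fun
    (fun t (ht : t ∈ Ioi 0) ↦ rpow_mul_log_div_comp_rpow hq0.ne' ht) measurableSet_Ioi]
  exact integrableOn_rpow_mul_log_div_sq_sub (by positivity)
    (sub_pos.2 ((one_div_lt hq0 two_pos).2 hq)) (by norm_num)

lemma beta_add_natCast_two_sub_add_natCast (a : ℝ) (n : ℕ) :
    beta (a + n) (2 - a + n) =
      Real.Gamma (n + 2 - a) * Real.Gamma (n + a) / Nat.factorial (2 * n + 1) := by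
  have h_factorial : Real.Gamma (a + n + (2 - a + n)) = Nat.factorial (2 * n + 1) := by
    rw [← Real.Gamma_nat_eq_factorial]
    push_cast
    ring_nf
  rw [beta, h_factorial, add_comm a, show 2 - a + n = n + 2 - a by ring, mul_comm]

lemma integral_log_rpow_add_one_div (hq : 1 / 2 < q) :
    ∫ x in Ioi (0 : ℝ), Real.log (x ^ q + 1) / (x ^ (2 * q) + 1) =
      -(1 / q * ∑' n : ℕ, 2 ^ n * Real.Gamma (n + 2 - 1 / q) * Real.Gamma (n + 1 / q) /
        (Nat.factorial (2 * n + 1)) * (digamma (n + 2 - 1 / q) - digamma (2 * n + 2))) := by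
  have hq0 : 0 < q := one_half_pos.trans hq
  have h_series := hasSum_integral_rpow_mul_log_div_sq_sub (z := 2) (one_div_pos.2 hq0)
    (sub_pos.2 ((one_div_lt hq0 two_pos).2 hq)) (by norm_num)
  have h_term (n : ℕ) : (2 : ℝ) ^ n * (beta (1 / q + n) (2 - 1 / q + n) *
      (digamma (2 - 1 / q + n) - digamma (1 / q + n + (2 - 1 / q + n)))) =
      2 ^ n * Real.Gamma (n + 2 - 1 / q) * Real.Gamma (n + 1 / q) / (Nat.factorial (2 * n + 1)) *
        (digamma (n + 2 - 1 / q) - digamma (2 * n + 2)) := by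
    rw [beta_add_natCast_two_sub_add_natCast, show 2 - 1 / q + n = n + 2 - 1 / q by ring,
      show 1 / q + n + (n + 2 - 1 / q) = 2 * n + 2 by ring]
    ring
  simp only [h_term] at h_series
  rw [h_series.tsum_eq, mul_neg, neg_neg, ← integral_comp_rpow_Ioi_of_pos (one_div_pos.2 hq0)]
  simp only [mul_smul]
  rw [integral_smul, smul_eq_mul, setIntegral_congr_fun measurableSet_Ioi
    fun t (ht : t ∈ Ioi 0) ↦ rpow_mul_log_div_comp_rpow hq0.ne' ht]

lemma log_rpow_add_one_div_comp_inv {x : ℝ} (hx : 0 < x) (q : ℝ) :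
    (x ^ 2)⁻¹ • (Real.log (x⁻¹ ^ q + 1) / (x⁻¹ ^ (2 * q) + 1)) =
      x ^ (2 * q - 2) * (Real.log (x ^ q + 1) - q * Real.log x) / (x ^ (2 * q) + 1) := by
  have hxq : 0 < x ^ q := Real.rpow_pos_of_pos hx q
  have h_log : Real.log ((x ^ q)⁻¹ + 1) = Real.log (x ^ q + 1) - q * Real.log x := by
    rw [← Real.log_rpow hx, ← Real.log_div (by positivity) hxq.ne', add_div, div_self hxq.ne',
      one_div, add_comm]
  rw [Real.inv_rpow hx.le, Real.inv_rpow hx.le, h_log, Real.rpow_sub hx, Real.rpow_two, smul_eq_mul]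
  field_simp
  ring

lemma rpow_add_one_mul_log_div_eq {x : ℝ} (hx : 0 < x) (q : ℝ) :
    (x ^ (2 * q - 2) + 1) * Real.log (x ^ q + 1) / (x ^ (2 * q) + 1) =
      (Real.log (x ^ q + 1) / (x ^ (2 * q) + 1) +
        (x ^ 2)⁻¹ • (Real.log (x⁻¹ ^ q + 1) / (x⁻¹ ^ (2 * q) + 1))) -
      q * (x ^ (2 * q - 1 - 1) * -Real.log x / (1 + x ^ (2 * q))) := by
  rw [log_rpow_add_one_div_comp_inv hx, show 2 * q - 1 - 1 = 2 * q - 2 by ring,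
    add_comm 1 (x ^ (2 * q))]
  ring

end LogRpow

theorem integral_log_rpow_half_two (q : ℝ) (hq : 1 / 2 < q) :
    (∫ x in (0:ℝ)..1, (x ^ (2 * q - 2) + 1) * Real.log (x ^ q + 1) / (x ^ (2 * q) + 1)) =
      (1 / (16 * q)) * (trigamma ((4 * q - 1) / (4 * q)) - trigamma ((2 * q - 1) / (4 * q)))
      - (1 / q) * ∑' n : ℕ,
          (2 : ℝ) ^ n * Real.Gamma ((n : ℝ) + 2 - 1 / q) * Real.Gamma ((n : ℝ) + 1 / q)
            / (Nat.factorial (2 * n + 1))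
          * (digamma ((n : ℝ) + 2 - 1 / q) - digamma (2 * (n : ℝ) + 2)) := by
  have hq0 : 0 < q := one_half_pos.trans hq
  have ha : 0 < 2 * q - 1 := by linarith
  have hb : 0 < 2 * q := mul_pos two_pos hq0
  have h_half_line := integrableOn_log_rpow_add_one_div hq
  have h_arg : (2 * q - 1) / (2 * (2 * q)) = (2 * q - 1) / (4 * q) := by ring_nf
  have h_arg_add : (2 * q - 1) / (4 * q) + 1 / 2 = (4 * q - 1) / (4 * q) := by field_simp; ring
  rw [intervalIntegral.integral_of_le zero_le_one, integral_Ioc_eq_integral_Ioo,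
    setIntegral_congr_fun measurableSet_Ioo fun x hx ↦ rpow_add_one_mul_log_div_eq hx.1 q,
    integral_sub (integrableOn_Ioo_add_comp_inv h_half_line)
      ((integrableOn_rpow_mul_neg_log_div ha (2 * q)).const_mul q),
    integral_Ioo_add_comp_inv h_half_line, integral_log_rpow_add_one_div hq, integral_const_mul,
    integral_rpow_mul_neg_log_div ha hb, h_arg, h_arg_add]
  field_simp
  ring
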